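/- Let S ∈ Σⁿ, let d ≥ 1 with n > 6d, and define S̄ = S[1,3d]·S[n−3d+1,n], S' = S[d+1,n−d], and S̄' = S[d+1,3d]·S[n−3d+1,n−d]. If |S̄| − L(S̄) ≤ d, |S'| − per(S') ≤ d, and |S̄'| − per(S̄') ≤ d, then |S| − L(S) = |S̄| − L(S̄). -/

import Mathlib

open Finset

/-- `S` has a border of length `ℓ`: `1 ≤ ℓ ≤ |S|` and the length-`ℓ` prefix of `S`
equals its length-`ℓ` suffix. -/
def HasBorder {α : Type*} (S : List α) (ℓ : ℕ) : Prop :=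
  1 ≤ ℓ ∧ ℓ ≤ S.length ∧ S.take ℓ = S.drop (S.length - ℓ)

/-- A string is unbordered if it has no proper border (no border of length `< |S|`). -/
def Unbordered {α : Type*} (S : List α) : Prop :=
  ∀ ℓ, ℓ < S.length → ¬ HasBorder S ℓ

/-- `maxUnb S` is `L(S)`: the maximum length of (nonempty) unbordered factors of `S`. -/
noncomputable def maxUnb {α : Type*} (S : List α) : ℕ :=
  sSup {k | ∃ T, T ≠ [] ∧ T <:+: S ∧ Unbordered T ∧ T.length = k}

/-- `p > 0` is a period of `T` if `T[i] = T[i+p]` whenever both indices are valid. -/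
def IsPeriod {α : Type*} (T : List α) (p : ℕ) : Prop :=
  0 < p ∧ ∀ (i : ℕ) (h : i + p < T.length),
    T[i]'(Nat.lt_of_le_of_lt (Nat.le_add_right i p) h) = T[i + p]'h

/-- `per T` is the shortest period of `T`. -/
noncomputable def per {α : Type*} (T : List α) : ℕ := sInf {p | IsPeriod T p}

/-- `borderF S` is `F(S)`: the length of the shortest border of `S`. -/
noncomputable def borderF {α : Type*} (S : List α) : ℕ := sInf {ℓ | HasBorder S ℓ}

/-- `substr S i j` is the factor `S[i,j]` in 1-based closed-interval indexing. -/
def substr {α : Type*} (S : List α) (i j : ℕ) : List α := (S.drop (i - 1)).take (j + 1 - i)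

/-!
Cut `S` as `P X M Y Q` with `|P| = |Q| = d`, so that `S̄ = P X Y Q`, `S' = X M Y` and `S̄' = X Y`:
passing between `S` and `S̄` replaces the middle block only. A longest unbordered factor of one of
the two strings misses at most `d` letters, hence is `x X M Y y` with `x` a suffix of `P` and `y` a
prefix of `Q`. After the replacement, a proper border of length `ℓ` would give the core `X M Y` the
period `|x X M Y y| - ℓ`; as the shortest period of the core is large, `ℓ ≤ min |x X| |Y y|`.
A border this short does not see the middle block, so it was already there before.
-/

section

variable {α : Type*}

theorem HasBorder.isPeriod {T : List α} {ℓ : ℕ} (h : HasBorder T ℓ) (hℓ : ℓ < T.length) :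
    IsPeriod T (T.length - ℓ) := by
  obtain ⟨-, -, heq⟩ := h
  refine ⟨Nat.sub_pos_of_lt hℓ, fun i hi ↦ ?_⟩
  have hget := List.getElem_of_eq heq (i := i) (by rw [List.length_take]; omega)
  simpa only [List.getElem_take, List.getElem_drop, Nat.add_comm] using hget

theorem IsPeriod.of_infix {T U : List α} {p : ℕ} (h : IsPeriod T p) (hU : U <:+: T) :
    IsPeriod U p := by
  obtain ⟨u, v, rfl⟩ := hU
  refine ⟨h.1, fun i hi ↦ ?_⟩
  have hget := h.2 (u.length + i) (by simp only [List.length_append]; omega)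
  simpa [List.getElem_append, Nat.add_assoc, hi, show i < U.length by omega] using hget

theorem IsPeriod.per_le {T : List α} {p : ℕ} (h : IsPeriod T p) : per T ≤ p :=
  Nat.sInf_le h

theorem HasBorder.add_per_le {T U : List α} {ℓ : ℕ} (h : HasBorder T ℓ) (hℓ : ℓ < T.length)
    (hU : U <:+: T) : ℓ + per U ≤ T.length := by
  have := ((h.isPeriod hℓ).of_infix hU).per_le
  omega

theorem hasBorder_append_append_iff {X M Y : List α} {ℓ : ℕ} (hX : ℓ ≤ X.length)
    (hY : ℓ ≤ Y.length) :
    HasBorder (X ++ M ++ Y) ℓ ↔ 1 ≤ ℓ ∧ X.take ℓ = Y.drop (Y.length - ℓ) := by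
  have htake : (X ++ M ++ Y).take ℓ = X.take ℓ := by
    rw [List.append_assoc, List.take_append_of_le_length hX]
  have hdrop : (X ++ M ++ Y).drop ((X ++ M ++ Y).length - ℓ) = Y.drop (Y.length - ℓ) := by
    rw [List.length_append, Nat.add_sub_assoc hY, List.drop_length_add_append]
  have hle : ℓ ≤ (X ++ M ++ Y).length := by simp only [List.length_append]; omega
  simp only [HasBorder, htake, hdrop, hle, true_and]

theorem Unbordered.replace_middle {X M N Y C : List α} (h : Unbordered (X ++ M ++ Y))
    (hC : C <:+: X ++ N ++ Y) (hX : X.length + N.length ≤ per C)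
    (hY : N.length + Y.length ≤ per C) : Unbordered (X ++ N ++ Y) := by
  intro ℓ hℓ hborder
  have hper := hborder.add_per_le hℓ hC
  simp only [List.length_append] at hper
  have hℓX : ℓ ≤ X.length := by omega
  have hℓY : ℓ ≤ Y.length := by omega
  have hborder' : HasBorder (X ++ M ++ Y) ℓ := by
    rwa [hasBorder_append_append_iff hℓX hℓY] at hborder ⊢
  have hpos := hborder.1
  exact h ℓ (by simp only [List.length_append]; omega) hborder'

theorem bddAbove_length_unbordered_infix (S : List α) :
    BddAbove {k | ∃ T, T ≠ [] ∧ T <:+: S ∧ Unbordered T ∧ T.length = k} :=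
  ⟨S.length, by rintro _ ⟨T, -, hTS, -, rfl⟩; exact hTS.length_le⟩

theorem Unbordered.length_le_maxUnb {S T : List α} (hT : Unbordered T) (hTS : T <:+: S) :
    T.length ≤ maxUnb S := by
  rcases eq_or_ne T [] with rfl | hne
  · exact Nat.zero_le _
  · exact le_csSup (bddAbove_length_unbordered_infix S) ⟨T, hne, hTS, hT, rfl⟩

theorem exists_infix_unbordered_length_eq_maxUnb (S : List α) :
    ∃ T, T <:+: S ∧ Unbordered T ∧ T.length = maxUnb S := by
  rcases Set.eq_empty_or_nonempty {k | ∃ T, T ≠ [] ∧ T <:+: S ∧ Unbordered T ∧ T.length = k}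
    with hempty | hne
  · have hzero : maxUnb S = 0 := by rw [maxUnb, hempty, csSup_empty, bot_eq_zero]
    exact ⟨[], List.nil_infix, fun ℓ hℓ ↦ absurd hℓ ℓ.not_lt_zero, hzero.symm⟩
  · obtain ⟨T, -, hTS, hT, hlen⟩ := Nat.sSup_mem hne (bddAbove_length_unbordered_infix S)
    exact ⟨T, hTS, hT, hlen⟩

theorem exists_suffix_prefix_of_infix_of_length_le {P W Q T : List α} (hT : T <:+: P ++ W ++ Q)
    (hP : W.length + Q.length ≤ T.length) (hQ : P.length + W.length ≤ T.length) :
    ∃ x y, x <:+ P ∧ y <+: Q ∧ T = x ++ W ++ y := by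
  obtain ⟨u, v, huv⟩ := hT
  have hlen := congrArg List.length huv
  simp only [List.length_append] at hlen
  obtain ⟨x, rfl⟩ : u <+: P :=
    List.prefix_of_prefix_length_le ⟨T ++ v, by rw [← List.append_assoc, huv]⟩
      ⟨W ++ Q, by rw [← List.append_assoc]⟩ (by omega)
  obtain ⟨y, rfl⟩ : v <:+ Q :=
    List.suffix_of_suffix_length_le ⟨u ++ T, huv⟩ (List.suffix_append _ Q) (by omega)
  refine ⟨x, y, List.suffix_append u x, List.prefix_append y v, ?_⟩
  have huv' : u ++ (T ++ v) = u ++ (x ++ W ++ y ++ v) := by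
    simpa only [List.append_assoc] using huv
  exact List.append_cancel_right (List.append_cancel_left huv')

theorem maxUnb_replace_middle_le {P X M N Y Q : List α}
    (hP : (P ++ (X ++ M ++ Y) ++ Q).length ≤ maxUnb (P ++ (X ++ M ++ Y) ++ Q) + P.length)
    (hQ : (P ++ (X ++ M ++ Y) ++ Q).length ≤ maxUnb (P ++ (X ++ M ++ Y) ++ Q) + Q.length)
    (hperX : P.length + X.length + N.length ≤ per (X ++ N ++ Y))
    (hperY : N.length + Y.length + Q.length ≤ per (X ++ N ++ Y)) :
    maxUnb (P ++ (X ++ M ++ Y) ++ Q) + N.length ≤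
      maxUnb (P ++ (X ++ N ++ Y) ++ Q) + M.length := by
  obtain ⟨T, hTS, hT, hlen⟩ := exists_infix_unbordered_length_eq_maxUnb (P ++ (X ++ M ++ Y) ++ Q)
  rw [← hlen] at hP hQ ⊢
  simp only [List.length_append] at hP hQ
  obtain ⟨x, y, hx, hy, rfl⟩ := exists_suffix_prefix_of_infix_of_length_le hTS
    (by simp only [List.length_append]; omega) (by simp only [List.length_append]; omega)
  have hassoc (K : List α) : x ++ (X ++ K ++ Y) ++ y = (x ++ X) ++ K ++ (Y ++ y) := by
    simp only [List.append_assoc]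
  have hxP := hx.length_le
  have hyQ := hy.length_le
  have hcore : X ++ N ++ Y <:+: (x ++ X) ++ N ++ (Y ++ y) := ⟨x, y, hassoc N⟩
  have hunb : Unbordered ((x ++ X) ++ N ++ (Y ++ y)) := by
    rw [hassoc] at hT
    exact hT.replace_middle hcore (by simp only [List.length_append]; omega)
      (by simp only [List.length_append]; omega)
  have hinfix : (x ++ X) ++ N ++ (Y ++ y) <:+: P ++ (X ++ N ++ Y) ++ Q := by
    obtain ⟨u, rfl⟩ := hx
    obtain ⟨v, rfl⟩ := hy
    exact ⟨u, v, by simp only [List.append_assoc]⟩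
  have hle := hunb.length_le_maxUnb hinfix
  simp only [List.length_append] at hle ⊢
  omega

theorem length_sub_maxUnb_replace_middle {P X M N Y Q : List α}
    (hP : (P ++ (X ++ M ++ Y) ++ Q).length - maxUnb (P ++ (X ++ M ++ Y) ++ Q) ≤ P.length)
    (hQ : (P ++ (X ++ M ++ Y) ++ Q).length - maxUnb (P ++ (X ++ M ++ Y) ++ Q) ≤ Q.length)
    (hMX : P.length + X.length + M.length ≤ per (X ++ M ++ Y))
    (hMY : M.length + Y.length + Q.length ≤ per (X ++ M ++ Y))
    (hNX : P.length + X.length + N.length ≤ per (X ++ N ++ Y))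
    (hNY : N.length + Y.length + Q.length ≤ per (X ++ N ++ Y)) :
    (P ++ (X ++ N ++ Y) ++ Q).length - maxUnb (P ++ (X ++ N ++ Y) ++ Q) =
      (P ++ (X ++ M ++ Y) ++ Q).length - maxUnb (P ++ (X ++ M ++ Y) ++ Q) := by
  have hMN := maxUnb_replace_middle_le (M := M) (by omega) (by omega) hNX hNY
  simp only [List.length_append] at hP hQ ⊢
  have hNM := maxUnb_replace_middle_le (P := P) (X := X) (M := N) (Y := Y) (Q := Q)
    (by simp only [List.length_append]; omega) (by simp only [List.length_append]; omega) hMX hMY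
  omega

theorem length_substr {S : List α} {i j : ℕ} (hj : j ≤ S.length) :
    (substr S (i + 1) j).length = j - i := by
  simp only [substr, List.length_take, List.length_drop]
  omega

theorem substr_one_length (S : List α) : substr S 1 S.length = S := by
  simp [substr]

theorem substr_append_substr (S : List α) {i j k : ℕ} (hij : i ≤ j) (hjk : j ≤ k) :
    substr S (i + 1) j ++ substr S (j + 1) k = substr S (i + 1) k := by
  simp only [substr, Nat.add_sub_cancel, Nat.add_sub_add_right]
  rw [show k - i = (j - i) + (k - j) by omega, List.take_add, List.drop_drop,
    Nat.add_sub_cancel' hij]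

/-- An unbordered factor missing at most `d` letters of the string can only acquire borders of
length at most `2 * d + g`: the core misses `2 * d` letters and its period slack is `g`. The blocks
must be at least that long; `d = g` gives the `3 * d` of the paper. -/
theorem reduction_correctness_general {S : List α} {d g a b : ℕ} (ha : 2 * d + g ≤ a)
    (hb : 2 * d + g ≤ b) (hab : a + b ≤ S.length) {Sbar S' Sbar' : List α}
    (hSbar : Sbar = substr S 1 a ++ substr S (S.length - b + 1) S.length)
    (hS' : S' = substr S (d + 1) (S.length - d))
    (hSbar' : Sbar' = substr S (d + 1) a ++ substr S (S.length - b + 1) (S.length - d))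
    (hdefect : Sbar.length - maxUnb Sbar ≤ d) (hper : S'.length - per S' ≤ g)
    (hper' : Sbar'.length - per Sbar' ≤ g) :
    S.length - maxUnb S = Sbar.length - maxUnb Sbar := by
  set n := S.length with hn
  have hP : (substr S 1 d).length = d := length_substr (by omega)
  have hX : (substr S (d + 1) a).length = a - d := length_substr (by omega)
  have hM : (substr S (a + 1) (n - b)).length = n - b - a := length_substr (by omega)
  have hY : (substr S (n - b + 1) (n - d)).length = n - d - (n - b) := length_substr (by omega)
  have hQ : (substr S (n - d + 1) n).length = n - (n - d) := length_substr (by omega)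
  have hcore : substr S (d + 1) a ++ substr S (a + 1) (n - b) ++ substr S (n - b + 1) (n - d)
      = S' := by
    rw [hS', substr_append_substr, substr_append_substr] <;> omega
  have hwhole : substr S 1 d ++ S' ++ substr S (n - d + 1) n = S := by
    rw [hS', substr_append_substr, substr_append_substr, hn, substr_one_length] <;> omega
  have hcore' : substr S (d + 1) a ++ [] ++ substr S (n - b + 1) (n - d) = Sbar' := by
    rw [hSbar', List.append_nil]
  have hwhole' : substr S 1 d ++ Sbar' ++ substr S (n - d + 1) n = Sbar := by
    rw [hSbar, hSbar', ← List.append_assoc, substr_append_substr, List.append_assoc,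
      substr_append_substr] <;> omega
  have hlenS' := congrArg List.length hcore
  have hlenSbar' := congrArg List.length hcore'
  simp only [List.length_append, List.length_nil, hX, hM, hY] at hlenS' hlenSbar'
  have hdefect_eq := length_sub_maxUnb_replace_middle (P := substr S 1 d) (X := substr S (d + 1) a)
    (M := []) (N := substr S (a + 1) (n - b)) (Y := substr S (n - b + 1) (n - d))
    (Q := substr S (n - d + 1) n)
  rw [hcore, hcore', hwhole, hwhole', hP, hX, hM, hY, hQ, List.length_nil] at hdefect_eq
  exact hdefect_eq (by omega) (by omega) (by omega) (by omega) (by omega) (by omega)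

end

/-- let `S ∈ Σⁿ`, `d ≥ 1`, `n > 6d`, and let `S̄ = S[1,3d]·S[n-3d+1,n]`,
`S' = S[d+1,n-d]`, `S̄' = S[d+1,3d]·S[n-3d+1,n-d]`. If `|S̄| - L(S̄) ≤ d`, `|S'| - per(S') ≤ d`,
and `|S̄'| - per(S̄') ≤ d`, then `|S| - L(S) = |S̄| - L(S̄)`. -/
theorem reduction_correctness {α : Type*} (n d : ℕ) (S : List α)
    (hlen : S.length = n) (hd : 1 ≤ d) (hn : 6 * d < n)
    (Sbar S' Sbar' : List α)
    (hSbar : Sbar = substr S 1 (3 * d) ++ substr S (n - 3 * d + 1) n)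
    (hS' : S' = substr S (d + 1) (n - d))
    (hSbar' : Sbar' = substr S (d + 1) (3 * d) ++ substr S (n - 3 * d + 1) (n - d))
    (hb1 : Sbar.length - maxUnb Sbar ≤ d)
    (hb2 : S'.length - per S' ≤ d)
    (hb3 : Sbar'.length - per Sbar' ≤ d) :
    S.length - maxUnb S = Sbar.length - maxUnb Sbar := by
  subst hlen
  exact reduction_correctness_general (by omega) (by omega) (by omega) hSbar hS' hSbar' hb1 hb2 hb3
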